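/- arXiv:math/0502222 — 2 statements merged into one kernel-verified Lean document; each statement's English description precedes it below -/
import Mathlib

section
/- Let B be the localization of the Laurent polynomial ring ℚ[u, u⁻¹] at the multiplicative submonoid generated by 1 − u, and let A = B[[q]] be the formal power series ring over B. Define X, Y, a₄, a₆ ∈ A by: X has q⁰-coefficient u/(1−u)² and, for N ≥ 1, q^N-coefficient Σ_{m ∣ N} m·(u^m + u^{−m} − 2); Y has q⁰-coefficient u²/(1−u)³ and, for N ≥ 1, q^N-coefficient Σ_{m ∣ N} ( (m(m−1)/2)·u^m − (m(m+1)/2)·u^{−m} + m ); a₄ has q⁰-coefficient 0 and q^N-coefficient −5·σ₃(N); a₆ has q⁰-coefficient 0 and q^N-coefficient −(5σ₃(N) + 7σ₅(N))/12, where σ_j(N) = Σ_{m ∣ N} m^j. Then Y² + X·Y = X³ + a₄·X + a₆ in A. (This is the statement that the Tate series X(u), Y(u) satisfy the Weierstrass equation y² + xy = x³ + a₄(q)x + a₆(q) of the Tate curve.) -/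
noncomputable section

/-- `B = ℚ[u,u⁻¹][(1-u)⁻¹]`: the localization of the Laurent polynomial ring
`ℚ[u,u⁻¹]` at the powers of `1 - u`. -/
abbrev TateBase : Type :=
  Localization (Submonoid.powers ((1 : LaurentPolynomial ℚ) - LaurentPolynomial.T 1))

/-- The Tate series `X(u) ∈ B[[q]]`: the `q⁰`-coefficient is `u/(1-u)²` and the
`q^N`-coefficient (for `N ≥ 1`) is `Σ_{m ∣ N} m·(u^m + u^{-m} - 2)`. -/
def tateX : PowerSeries TateBase :=
  PowerSeries.mk fun N =>
    if N = 0 then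
      Localization.mk (LaurentPolynomial.T 1)
        ⟨((1 : LaurentPolynomial ℚ) - LaurentPolynomial.T 1) ^ 2, 2, rfl⟩
    else
      algebraMap (LaurentPolynomial ℚ) TateBase
        (∑ m ∈ N.divisors, LaurentPolynomial.C (m : ℚ) *
          (LaurentPolynomial.T (m : ℤ) + LaurentPolynomial.T (-(m : ℤ)) - 2))

/-- The Tate series `Y(u) ∈ B[[q]]`: the `q⁰`-coefficient is `u²/(1-u)³` and the
`q^N`-coefficient (for `N ≥ 1`) is
`Σ_{m ∣ N} ((m(m-1)/2)·u^m - (m(m+1)/2)·u^{-m} + m)`. -/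
def tateY : PowerSeries TateBase :=
  PowerSeries.mk fun N =>
    if N = 0 then
      Localization.mk (LaurentPolynomial.T 2)
        ⟨((1 : LaurentPolynomial ℚ) - LaurentPolynomial.T 1) ^ 3, 3, rfl⟩
    else
      algebraMap (LaurentPolynomial ℚ) TateBase
        (∑ m ∈ N.divisors,
          (LaurentPolynomial.C ((m : ℚ) * ((m : ℚ) - 1) / 2) *
              LaurentPolynomial.T (m : ℤ)
            - LaurentPolynomial.C ((m : ℚ) * ((m : ℚ) + 1) / 2) *
              LaurentPolynomial.T (-(m : ℤ))
            + LaurentPolynomial.C (m : ℚ)))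

/-- The series `a₄(q) = -5·Σ_{n≥1} σ₃(n)qⁿ ∈ B[[q]]`. -/
def tateA4 : PowerSeries TateBase :=
  PowerSeries.mk fun N =>
    if N = 0 then 0
    else
      algebraMap (LaurentPolynomial ℚ) TateBase
        (LaurentPolynomial.C (-5 * ∑ m ∈ N.divisors, (m : ℚ) ^ 3))

/-- The series `a₆(q) = -Σ_{n≥1} ((5σ₃(n) + 7σ₅(n))/12)qⁿ ∈ B[[q]]`. -/
def tateA6 : PowerSeries TateBase :=
  PowerSeries.mk fun N =>
    if N = 0 then 0
    else
      algebraMap (LaurentPolynomial ℚ) TateBase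
        (LaurentPolynomial.C
          (-(5 * (∑ m ∈ N.divisors, (m : ℚ) ^ 3) +
              7 * (∑ m ∈ N.divisors, (m : ℚ) ^ 5)) / 12))

open LaurentPolynomial in
/-- w -/
def tw : LaurentPolynomial ℚ := T 1 + T (-1) - 2

open LaurentPolynomial in
/-- d -/
def td : LaurentPolynomial ℚ := T 1 - T (-1)

open LaurentPolynomial in
theorem tT_inv : (T 1 : LaurentPolynomial ℚ) * T (-1) = 1 := by
  rw [← T_add]; simp

theorem td_sq : td ^ 2 = tw ^ 2 + 4 * tw := by
  unfold td tw
  linear_combination (-4) * tT_inv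

open LaurentPolynomial in
theorem tU_exists (m : ℕ) : ∃ U : LaurentPolynomial ℚ, invert U = U ∧
    T (m : ℤ) - T (-(m : ℤ)) = td * (C (m : ℚ) + C ((m : ℚ) * ((m : ℚ) ^ 2 - 1) / 6) * tw
      + tw ^ 2 * U) := by
  induction m using Nat.twoStepInduction with
  | zero => exact ⟨0, by simp, by simp⟩
  | one => exact ⟨0, by simp, by simp [td]⟩
  | more n h0 h1 =>
    obtain ⟨U, hU, e0⟩ := h0
    obtain ⟨V, hV, e1⟩ := h1
    refine ⟨(T 1 + T (-1)) * V - U + C (((n : ℚ) + 1) * (((n : ℚ) + 1) ^ 2 - 1) / 6), ?_, ?_⟩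
    · simp only [map_add, map_sub, map_mul, invert_T, invert_C, hU, hV, neg_neg]
      ring
    · have r : (T ((n + 2 : ℕ) : ℤ) - T (-((n + 2 : ℕ) : ℤ)) : LaurentPolynomial ℚ) =
          (T 1 + T (-1)) * (T ((n + 1 : ℕ) : ℤ) - T (-((n + 1 : ℕ) : ℤ)))
            - (T (n : ℤ) - T (-(n : ℤ))) := by
        simp only [add_mul, mul_sub, ← T_add]
        push_cast
        ring_nf
      rw [r, e0, e1]
      have c2 : (C (((n + 2 : ℕ) : ℚ)) : LaurentPolynomial ℚ)
        = 2 * C (((n + 1 : ℕ) : ℚ)) - C (n : ℚ) := by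
        rw [show (2 : LaurentPolynomial ℚ) = C 2 from (map_ofNat C 2).symm, ← map_mul, ← map_sub]
        congr 1; push_cast; ring
      have c3 : (C (((n + 2 : ℕ) : ℚ) * (((n + 2 : ℕ) : ℚ) ^ 2 - 1) / 6) : LaurentPolynomial ℚ)
        = 2 * C (((n + 1 : ℕ) : ℚ) * (((n + 1 : ℕ) : ℚ) ^ 2 - 1) / 6)
          - C ((n : ℚ) * ((n : ℚ) ^ 2 - 1) / 6) + C (((n + 1 : ℕ) : ℚ)) := by
        rw [show (2 : LaurentPolynomial ℚ) = C 2 from (map_ofNat C 2).symm, ← map_mul, ← map_sub,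
          ← map_add]
        congr 1; push_cast; ring
      rw [c2, c3]
      push_cast
      unfold tw
      ring

open LaurentPolynomial in
theorem tV_exists (m : ℕ) : ∃ U : LaurentPolynomial ℚ, invert U = U ∧
    T (m : ℤ) + T (-(m : ℤ)) - 2 = tw * (C ((m : ℚ) ^ 2) +
      C ((m : ℚ) ^ 2 * ((m : ℚ) ^ 2 - 1) / 12) * tw + tw ^ 2 * U) := by
  induction m using Nat.twoStepInduction with
  | zero => exact ⟨0, by simp, by simp; norm_num⟩
  | one => exact ⟨0, by simp, by simp [tw]⟩
  | more n h0 h1 =>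
    obtain ⟨U, hU, e0⟩ := h0
    obtain ⟨V, hV, e1⟩ := h1
    refine ⟨(T 1 + T (-1)) * V - U + C (((n : ℚ) + 1) ^ 2 * (((n : ℚ) + 1) ^ 2 - 1) / 12), ?_, ?_⟩
    · simp only [map_add, map_sub, map_mul, invert_T, invert_C, hU, hV, neg_neg]
      ring
    · have r : (T ((n + 2 : ℕ) : ℤ) + T (-((n + 2 : ℕ) : ℤ)) - 2 : LaurentPolynomial ℚ) =
          (T 1 + T (-1)) * (T ((n + 1 : ℕ) : ℤ) + T (-((n + 1 : ℕ) : ℤ)) - 2)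
            - (T (n : ℤ) + T (-(n : ℤ)) - 2) + 2 * tw := by
        unfold tw
        simp only [add_mul, mul_sub, mul_add, ← T_add]
        push_cast
        ring_nf
      rw [r, e0, e1]
      have c2 : (C (((n + 2 : ℕ) : ℚ) ^ 2) : LaurentPolynomial ℚ)
        = 2 * C (((n + 1 : ℕ) : ℚ) ^ 2) - C ((n : ℚ) ^ 2) + 2 := by
        rw [show (2 : LaurentPolynomial ℚ) = C 2 from (map_ofNat C 2).symm, ← map_mul, ← map_sub,
          ← map_add]
        congr 1; push_cast; ring
      have c3 : (C (((n + 2 : ℕ) : ℚ) ^ 2 * (((n + 2 : ℕ) : ℚ) ^ 2 - 1) / 12) : LaurentPolynomial ℚ)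
        = 2 * C (((n + 1 : ℕ) : ℚ) ^ 2 * (((n + 1 : ℕ) : ℚ) ^ 2 - 1) / 12)
          - C ((n : ℚ) ^ 2 * ((n : ℚ) ^ 2 - 1) / 12) + C (((n + 1 : ℕ) : ℚ) ^ 2) := by
        rw [show (2 : LaurentPolynomial ℚ) = C 2 from (map_ofNat C 2).symm, ← map_mul, ← map_sub,
          ← map_add]
        congr 1; push_cast; ring
      rw [c2, c3]
      push_cast
      unfold tw
      ring

/-! ### The embedding into Laurent series -/

/-- u -/
def tuL : (LaurentSeries ℚ)ˣ :=
  Units.mk0 (HahnSeries.single (1 : ℤ) (1 : ℚ)) (by simp)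

/-- e -/
def te : LaurentPolynomial ℚ →+* LaurentSeries ℚ :=
  LaurentPolynomial.eval₂ HahnSeries.C tuL

theorem te_T (n : ℤ) : te (LaurentPolynomial.T n) = HahnSeries.single n (1 : ℚ) := by
  rw [te, LaurentPolynomial.eval₂_T, RatFunc.single_zpow]
  simp [tuL]

theorem te_coeff (p : LaurentPolynomial ℚ) (k : ℤ) : (te p).coeff k = p.coeff k := by
  induction p using LaurentPolynomial.induction_on' with
  | add p q hp hq => simp [hp, hq]
  | C_mul_T n a =>
    rw [map_mul, te_T, te, LaurentPolynomial.eval₂_C]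
    rw [← LaurentPolynomial.single_eq_C_mul_T, HahnSeries.C_apply, HahnSeries.single_mul_single]
    simp [HahnSeries.coeff_single, AddMonoidAlgebra.coeff_single, Finsupp.single_apply, eq_comm,
      -LaurentPolynomial.single_eq_C_mul_T]

theorem te_unit (y : Submonoid.powers ((1 : LaurentPolynomial ℚ) - LaurentPolynomial.T 1)) :
    IsUnit (te y) := by
  obtain ⟨y, n, rfl⟩ := y
  simp only [map_pow]
  apply IsUnit.pow
  rw [isUnit_iff_ne_zero]
  intro h
  have := congrArg (fun z => HahnSeries.coeff z 0) h
  simp only [te_coeff] at this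
  simp [-LaurentPolynomial.T_zero] at this

/-- iota -/
def tiota : TateBase →+* LaurentSeries ℚ := IsLocalization.lift te_unit

theorem tiota_alg (p : LaurentPolynomial ℚ) :
    tiota (algebraMap (LaurentPolynomial ℚ) TateBase p) = te p :=
  IsLocalization.lift_eq _ _

/-! ### Double power series -/

/-- P -/
abbrev TP : Type := PowerSeries (PowerSeries ℚ)

/-- construct -/
def tmk (b : ℕ → ℕ → ℚ) : TP := PowerSeries.mk fun j => PowerSeries.mk fun i => b i j

/-- coefficient of `u^i v^j` -/
def tco (f : TP) (i j : ℕ) : ℚ := PowerSeries.coeff i (PowerSeries.coeff j f)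

theorem tco_mk (b : ℕ → ℕ → ℚ) (i j : ℕ) : tco (tmk b) i j = b i j := by
  simp [tco, tmk]

theorem tP_ext {f g : TP} (h : ∀ i j, tco f i j = tco g i j) : f = g := by
  ext j i; exact h i j

/-- swap -/
def tswap : TP →+* TP where
  toFun f := tmk fun i j => tco f j i
  map_one' := by
    apply tP_ext; intro i j
    rw [tco_mk]
    simp only [tco, PowerSeries.coeff_one]
    split_ifs <;> simp_all [PowerSeries.coeff_one]
  map_zero' := by apply tP_ext; intro i j; rw [tco_mk]; simp [tco]
  map_add' f g := by apply tP_ext; intro i j; rw [tco_mk]; simp [tco, tmk]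
  map_mul' f g := by
    apply tP_ext; intro i j; rw [tco_mk]
    simp only [tco, tmk, PowerSeries.coeff_mul, map_sum, PowerSeries.coeff_mk]
    rw [Finset.sum_comm]

theorem tco_swap (f : TP) (i j : ℕ) : tco (tswap f) i j = tco f j i := by
  change tco (tmk fun i j => tco f j i) i j = _
  rw [tco_mk]

theorem tswap_mk (b : ℕ → ℕ → ℚ) : tswap (tmk b) = tmk fun i j => b j i := by
  apply tP_ext; intro i j; rw [tco_swap, tco_mk, tco_mk]

/-- Phi -/
def tPhi : TP →+* PowerSeries (LaurentSeries ℚ) :=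
  (PowerSeries.rescale (HahnSeries.single (-1 : ℤ) (1 : ℚ))).comp
    (PowerSeries.map (HahnSeries.ofPowerSeries ℤ ℚ))

theorem tPhi_coeff (f : TP) (N : ℕ) (k : ℤ) :
    (PowerSeries.coeff N (tPhi f)).coeff k =
      if 0 ≤ k + N then tco f (k + N).toNat N else 0 := by
  simp only [tPhi, RingHom.comp_apply, PowerSeries.coeff_rescale, PowerSeries.coeff_map]
  rw [HahnSeries.single_pow]
  have := HahnSeries.coeff_single_mul_add (r := (1 : ℚ) ^ N) (x := HahnSeries.ofPowerSeries ℤ ℚ (PowerSeries.coeff N f)) (a := k + N) (b := N • (-1 : ℤ))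
  rw [show k + N + N • (-1 : ℤ) = k by simp] at this
  rw [this, one_pow, one_mul, PowerSeries.coeff_coe]
  split_ifs with h1 h2 h2
  · omega
  · rfl
  · rw [tco]; congr 2; omega
  · omega

theorem talg_identity {R : Type*} [CommRing R] (x W d c s3 s5 S2 R2 X Y : R)
    (hx : x * W = 1) (hd : d ^ 2 = W ^ 2 + 4 * W) (hc : 12 * c = 1)
    (hX : X = x + W * (s3 + c * (s5 - s3) * W + W ^ 2 * R2))
    (hY : 2 * Y + X = d * (s3 + 2 * c * (s5 - s3) * W + W ^ 2 * S2) - d * x ^ 2) :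
    4 * (Y ^ 2 + X * Y - (X ^ 3 + (-5 * s3) * X + (-c * (5 * s3 + 7 * s5)))) =
      W * (-(8 * S2 + 12 * R2) - 4 * (c * (s5 - s3)) - 2 * W * S2 - 2 * (c * (s5 - s3)) - 2 * W * R2
        + (W + 4) * (s3 + 2 * c * (s5 - s3) * W + W ^ 2 * S2) ^ 2
        - 12 * (s3 + c * (s5 - s3) * W + W ^ 2 * R2) ^ 2
        - 4 * W ^ 2 * (s3 + c * (s5 - s3) * W + W ^ 2 * R2) ^ 3
        - W * (s3 + c * (s5 - s3) * W + W ^ 2 * R2) ^ 2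
        + 20 * s3 * (s3 + c * (s5 - s3) * W + W ^ 2 * R2)) := by
  have h4 : 4 * (Y ^ 2 + X * Y - (X ^ 3 + (-5 * s3) * X + (-c * (5 * s3 + 7 * s5)))) =
      (2 * Y + X) ^ 2 - X ^ 2 - 4 * X ^ 3 + 20 * s3 * X + 4 * c * (5 * s3 + 7 * s5) := by ring
  rw [h4, hY, hX]
  generalize hS : s3 + 2 * c * (s5 - s3) * W + W ^ 2 * S2 = S
  generalize hr : s3 + c * (s5 - s3) * W + W ^ 2 * R2 = r
  have h1 : (d * S - d * x ^ 2) ^ 2 - (x + W * r) ^ 2 - 4 * (x + W * r) ^ 3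
      + 20 * s3 * (x + W * r) + 4 * c * (5 * s3 + 7 * s5) =
      x * (-8 * S - 12 * r + 20 * s3) - 2 * S - 2 * r + 4 * c * (5 * s3 + 7 * s5)
      + W * ((W + 4) * S ^ 2 - 12 * r ^ 2 - 4 * W ^ 2 * r ^ 3 - W * r ^ 2 + 20 * s3 * r) := by
    linear_combination (S - x ^ 2) ^ 2 * hd + (-2 * S * (x * W + 1) - 8 * S * x
      + x ^ 2 * (x * W + 1) + 4 * x ^ 3 - 12 * x * r - 12 * W * r ^ 2 - 2 * r) * hx
  rw [h1]
  have h2 : x * (-8 * S - 12 * r + 20 * s3) =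
      - 28 * (c * (s5 - s3)) - W * (8 * S2 + 12 * R2) := by
    rw [← hS, ← hr]
    linear_combination (- 28 * (c * (s5 - s3)) - W * (8 * S2 + 12 * R2)) * hx
  have h3 : - 28 * (c * (s5 - s3)) - 2 * S - 2 * r + 4 * c * (5 * s3 + 7 * s5) =
      - W * (6 * (c * (s5 - s3)) + 2 * W * S2 + 2 * W * R2) := by
    rw [← hS, ← hr]
    linear_combination (4 * s3) * hc
  linear_combination h2 + h3

/-- U2 -/
def tU (m : ℕ) : LaurentPolynomial ℚ := (tU_exists m).choose
/-- V2 -/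
def tV (m : ℕ) : LaurentPolynomial ℚ := (tV_exists m).choose

/-- S2 -/
def tS2 : PowerSeries (LaurentPolynomial ℚ) := PowerSeries.mk fun N =>
  ∑ m ∈ N.divisors, LaurentPolynomial.C ((m : ℚ) ^ 2) * tU m
/-- R2 -/
def tR2 : PowerSeries (LaurentPolynomial ℚ) := PowerSeries.mk fun N =>
  ∑ m ∈ N.divisors, LaurentPolynomial.C (m : ℚ) * tV m
/-- sigma -/
def tsig (a : ℕ) : PowerSeries (LaurentPolynomial ℚ) := PowerSeries.mk fun N =>
  ∑ m ∈ N.divisors, LaurentPolynomial.C ((m : ℚ) ^ a)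
/-- c -/
def tc : PowerSeries (LaurentPolynomial ℚ) := PowerSeries.C (LaurentPolynomial.C (1 / 12 : ℚ))

/-- the coefficientwise map -/
def tj : PowerSeries (LaurentPolynomial ℚ) →+* PowerSeries TateBase :=
  PowerSeries.map (algebraMap (LaurentPolynomial ℚ) TateBase)

/-- x0 -/
def tx0 : TateBase := Localization.mk (LaurentPolynomial.T 1)
        ⟨((1 : LaurentPolynomial ℚ) - LaurentPolynomial.T 1) ^ 2, 2, rfl⟩
/-- y0 -/
def ty0 : TateBase := Localization.mk (LaurentPolynomial.T 2)
        ⟨((1 : LaurentPolynomial ℚ) - LaurentPolynomial.T 1) ^ 3, 3, rfl⟩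

theorem tx0_mul : tx0 * algebraMap (LaurentPolynomial ℚ) TateBase (1 - LaurentPolynomial.T 1) ^ 2
    = algebraMap (LaurentPolynomial ℚ) TateBase (LaurentPolynomial.T 1) := by
  rw [← map_pow, tx0, Localization.mk_eq_mk']
  exact IsLocalization.mk'_spec _ _ _

theorem ty0_mul : ty0 * algebraMap (LaurentPolynomial ℚ) TateBase (1 - LaurentPolynomial.T 1) ^ 3
    = algebraMap (LaurentPolynomial ℚ) TateBase (LaurentPolynomial.T 1) ^ 2 := by
  rw [← map_pow, ty0, Localization.mk_eq_mk', ← map_pow, LaurentPolynomial.T_pow]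
  exact IsLocalization.mk'_spec _ _ _

theorem tv_unit : IsUnit
    (algebraMap (LaurentPolynomial ℚ) TateBase (1 - LaurentPolynomial.T 1)) :=
  IsLocalization.map_units TateBase
    (⟨_, 1, pow_one _⟩ : Submonoid.powers ((1 : LaurentPolynomial ℚ) - LaurentPolynomial.T 1))

theorem tx0_w : tx0 * algebraMap (LaurentPolynomial ℚ) TateBase tw = 1 := by
  have h := tx0_mul
  have hi := congrArg (algebraMap (LaurentPolynomial ℚ) TateBase) tT_inv
  apply (tv_unit.pow 2).mul_left_cancel
  simp only [tw, map_sub, map_add, map_one, map_mul, map_ofNat] at *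
  linear_combination (algebraMap (LaurentPolynomial ℚ) TateBase (LaurentPolynomial.T 1) +
    algebraMap (LaurentPolynomial ℚ) TateBase (LaurentPolynomial.T (-1)) - 2) * h + hi

theorem tz0_eq : 2 * ty0 + tx0 = - algebraMap (LaurentPolynomial ℚ) TateBase td * tx0 ^ 2 := by
  have h := tx0_mul
  have h2 := ty0_mul
  have hi := congrArg (algebraMap (LaurentPolynomial ℚ) TateBase) tT_inv
  apply (tv_unit.pow 4).mul_left_cancel
  simp only [td, map_sub, map_add, map_one, map_mul, map_ofNat] at *
  generalize algebraMap (LaurentPolynomial ℚ) TateBase (LaurentPolynomial.T 1) = t at *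
  generalize algebraMap (LaurentPolynomial ℚ) TateBase (LaurentPolynomial.T (-1)) = s at *
  linear_combination (2 * (1 - t)) * h2 + (1 - t) ^ 2 * h + (t - s) * (tx0 * (1 - t) ^ 2 + t) * h
    - t * hi

theorem tateX_eq : tateX = PowerSeries.C tx0 + tj (PowerSeries.C tw) *
    (tj (tsig 3) + tj tc * (tj (tsig 5) - tj (tsig 3)) * tj (PowerSeries.C tw)
      + tj (PowerSeries.C tw) ^ 2 * tj tR2) := by
  rw [show tateX = PowerSeries.C tx0 + tj (PowerSeries.mk fun N => 
    ∑ m ∈ N.divisors, LaurentPolynomial.C (m : ℚ) *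
          (LaurentPolynomial.T (m : ℤ) + LaurentPolynomial.T (-(m : ℤ)) - 2)) from ?_]
  · simp only [← map_mul, ← map_sub, ← map_add, ← map_pow]
    congr 2
    ext1 N
    rw [mul_add, mul_add, mul_comm (tc * _), ← mul_assoc, ← mul_assoc, ← mul_assoc, tc]
    simp only [← map_mul, ← map_pow, map_add, map_sub, PowerSeries.coeff_C_mul, PowerSeries.coeff_mk, tsig, tR2]
    simp only [Finset.mul_sum, ← Finset.sum_sub_distrib, ← Finset.sum_add_distrib]
    apply Finset.sum_congr rfl
    intro m _
    rw [(tV_exists m).choose_spec.2]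
    have e1 : (LaurentPolynomial.C ((m : ℚ) ^ 3) : LaurentPolynomial ℚ) =
      LaurentPolynomial.C (m : ℚ) * LaurentPolynomial.C ((m : ℚ) ^ 2) := by
      rw [← map_mul]; congr 1; ring
    have e2 : (LaurentPolynomial.C (m : ℚ) *
       LaurentPolynomial.C ((m : ℚ) ^ 2 * ((m : ℚ) ^ 2 - 1) / 12) : LaurentPolynomial ℚ) =
      LaurentPolynomial.C (1 / 12) * (LaurentPolynomial.C ((m : ℚ) ^ 5)
       - LaurentPolynomial.C ((m : ℚ) ^ 3)) := by
      rw [← map_mul, ← map_sub, ← map_mul]; congr 1; ring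
    simp only [tV]
    linear_combination (-tw) * e1 + (tw * tw) * e2
  · ext1 N
    rw [tateX, PowerSeries.coeff_mk, map_add, PowerSeries.coeff_C, tj, PowerSeries.coeff_map,
      PowerSeries.coeff_mk]
    split_ifs with h
    · subst h; simp [tx0]
    · rw [zero_add]

theorem tateZ_eq' : 2 * tateY + tateX = PowerSeries.C (2 * ty0 + tx0) +
    tj (PowerSeries.mk fun N => ∑ m ∈ N.divisors, LaurentPolynomial.C ((m : ℚ) ^ 2) *
          (LaurentPolynomial.T (m : ℤ) - LaurentPolynomial.T (-(m : ℤ)))) := by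
  ext1 N
  rw [tateX, tateY, two_mul, map_add, map_add, PowerSeries.coeff_mk, PowerSeries.coeff_mk,
      map_add, PowerSeries.coeff_C, tj, PowerSeries.coeff_map,
      PowerSeries.coeff_mk]
  split_ifs with h
  · subst h; simp [tx0, ty0, two_mul]
  · rw [zero_add, ← map_add, ← map_add]
    congr 1
    simp only [← Finset.sum_add_distrib]
    apply Finset.sum_congr rfl
    intro m _
    have e1 : (LaurentPolynomial.C ((m : ℚ) * ((m : ℚ) - 1) / 2) : LaurentPolynomial ℚ) +
      LaurentPolynomial.C ((m : ℚ) * ((m : ℚ) - 1) / 2) + LaurentPolynomial.C (m : ℚ) =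
       LaurentPolynomial.C ((m : ℚ) ^ 2) := by
      rw [← map_add, ← map_add]; congr 1; ring
    have e2 : (LaurentPolynomial.C ((m : ℚ) * ((m : ℚ) + 1) / 2) : LaurentPolynomial ℚ) +
      LaurentPolynomial.C ((m : ℚ) * ((m : ℚ) + 1) / 2) - LaurentPolynomial.C (m : ℚ) =
       LaurentPolynomial.C ((m : ℚ) ^ 2) := by
      rw [← map_add, ← map_sub]; congr 1; ring
    linear_combination (LaurentPolynomial.T (m : ℤ)) * e1 - LaurentPolynomial.T (-(m : ℤ)) * e2

theorem tateZ_eq : 2 * tateY + tateX = tj (PowerSeries.C td) *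
    (tj (tsig 3) + 2 * tj tc * (tj (tsig 5) - tj (tsig 3)) * tj (PowerSeries.C tw)
      + tj (PowerSeries.C tw) ^ 2 * tj tS2) - tj (PowerSeries.C td) * (PowerSeries.C tx0) ^ 2 := by
  have h0 : PowerSeries.C (2 * ty0 + tx0) = - (tj (PowerSeries.C td) * (PowerSeries.C tx0) ^ 2) := by
    rw [tz0_eq, tj, PowerSeries.map_C]
    simp only [map_mul, map_neg, map_pow]
    ring
  rw [tateZ_eq', h0, neg_add_eq_sub, show (2 : PowerSeries TateBase) = tj 2 from (map_ofNat tj 2).symm]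
  congr 1
  simp only [← map_mul, ← map_sub, ← map_add, ← map_pow]
  congr 1
  ext1 N
  rw [mul_add, mul_add, mul_comm (_ * _) (PowerSeries.C tw), ← mul_assoc, ← mul_assoc, ← mul_assoc, tc,
    show (2 : PowerSeries (LaurentPolynomial ℚ)) = PowerSeries.C 2 from (map_ofNat PowerSeries.C 2).symm]
  simp only [← map_mul, ← map_pow, map_add, map_sub, PowerSeries.coeff_C_mul, PowerSeries.coeff_mk, tsig, tS2]
  simp only [Finset.mul_sum, ← Finset.sum_sub_distrib, ← Finset.sum_add_distrib]
  apply Finset.sum_congr rfl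
  intro m _
  rw [(tU_exists m).choose_spec.2]
  have e1 : (LaurentPolynomial.C ((m : ℚ) ^ 3) : LaurentPolynomial ℚ) =
    LaurentPolynomial.C ((m : ℚ) ^ 2) * LaurentPolynomial.C (m : ℚ) := by
    rw [← map_mul]; congr 1; ring
  have e2 : (LaurentPolynomial.C ((m : ℚ) ^ 2) *
     LaurentPolynomial.C ((m : ℚ) * ((m : ℚ) ^ 2 - 1) / 6) : LaurentPolynomial ℚ) =
    2 * LaurentPolynomial.C (1 / 12) * (LaurentPolynomial.C ((m : ℚ) ^ 5)
     - LaurentPolynomial.C ((m : ℚ) ^ 3)) := by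
    rw [← map_mul, ← map_sub, 
      show (2 : LaurentPolynomial ℚ) = LaurentPolynomial.C 2 from (map_ofNat LaurentPolynomial.C 2).symm, ← map_mul, ← map_mul]; congr 1; ring
  simp only [tU]
  linear_combination (-td) * e1 + (tw * td) * e2

theorem tateA4_eq : tateA4 = -5 * tj (tsig 3) := by
  rw [show (-5 : PowerSeries TateBase) = tj (PowerSeries.C (LaurentPolynomial.C (-5))) by
    simp only [map_neg, map_ofNat], ← map_mul]
  ext1 N
  rw [tateA4, tj, PowerSeries.coeff_map, PowerSeries.coeff_mk, PowerSeries.coeff_C_mul, tsig,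
    PowerSeries.coeff_mk, ← map_sum, ← map_mul]
  split_ifs with h
  · subst h; simp
  · rfl

theorem tateA6_eq : tateA6 = -tj tc * (5 * tj (tsig 3) + 7 * tj (tsig 5)) := by
  rw [show (5 : PowerSeries TateBase) = tj (PowerSeries.C (LaurentPolynomial.C (5))) by
    simp only [map_ofNat], show (7 : PowerSeries TateBase) = tj (PowerSeries.C (LaurentPolynomial.C (7))) by
    simp only [map_ofNat], tc]
  simp only [← map_mul, ← map_add, ← map_neg]
  ext1 N
  rw [tateA6, tj, PowerSeries.coeff_map, PowerSeries.coeff_mk, PowerSeries.coeff_C_mul, map_add,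
    PowerSeries.coeff_C_mul, PowerSeries.coeff_C_mul, tsig, tsig,
    PowerSeries.coeff_mk, PowerSeries.coeff_mk, ← map_sum, ← map_sum, ← map_mul, ← map_mul,
    ← map_add, ← map_mul]
  split_ifs with h
  · subst h; simp
  · congr 2; ring

/-- G -/
def tH {R : Type*} [CommRing R] (W c s3 s5 S2 R2 : R) : R :=
      W * (-(8 * S2 + 12 * R2) - 4 * (c * (s5 - s3)) - 2 * W * S2 - 2 * (c * (s5 - s3)) - 2 * W * R2
        + (W + 4) * (s3 + 2 * c * (s5 - s3) * W + W ^ 2 * S2) ^ 2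
        - 12 * (s3 + c * (s5 - s3) * W + W ^ 2 * R2) ^ 2
        - 4 * W ^ 2 * (s3 + c * (s5 - s3) * W + W ^ 2 * R2) ^ 3
        - W * (s3 + c * (s5 - s3) * W + W ^ 2 * R2) ^ 2
        + 20 * s3 * (s3 + c * (s5 - s3) * W + W ^ 2 * R2))

theorem tH_map {R S : Type*} [CommRing R] [CommRing S] (f : R →+* S) (W c s3 s5 S2 R2 : R) :
    f (tH W c s3 s5 S2 R2) = tH (f W) (f c) (f s3) (f s5) (f S2) (f R2) := by
  simp only [tH, map_mul, map_add, map_sub, map_neg, map_pow, map_ofNat]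

/-- H -/
def tHH : PowerSeries (LaurentPolynomial ℚ) :=
  tH (PowerSeries.C tw) tc (tsig 3) (tsig 5) tS2 tR2

theorem tHH_eq : 4 * (tateY ^ 2 + tateX * tateY - (tateX ^ 3 + tateA4 * tateX + tateA6))
    = tj tHH := by
  rw [tHH, tH_map, tateA4_eq, tateA6_eq]
  refine talg_identity (PowerSeries.C tx0) _ (tj (PowerSeries.C td)) _ _ _ _ _ _ _ ?_ ?_ ?_ tateX_eq tateZ_eq
  · rw [tj, PowerSeries.map_C, ← map_mul, tx0_w, map_one]
  · rw [← map_pow, ← map_pow, td_sq]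
    simp only [map_add, map_mul, map_pow, map_ofNat]
  · rw [show (12 : PowerSeries TateBase) = tj (PowerSeries.C (LaurentPolynomial.C (12))) by
      simp only [map_ofNat], tc]
    simp only [← map_mul]
    norm_num

theorem tHH_invert : PowerSeries.map ((LaurentPolynomial.invert (R := ℚ)) : _ →+* _) tHH = tHH := by
  have hw : LaurentPolynomial.invert tw = tw := by
    simp only [tw, map_sub, map_add, LaurentPolynomial.invert_T, neg_neg, map_ofNat]; ring
  rw [tHH, tH_map]
  congr 1
  · rw [PowerSeries.map_C]; exact congrArg _ hw
  · rw [tc, PowerSeries.map_C]; simp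
  · ext1 N; simp [tsig, PowerSeries.coeff_map]
  · ext1 N; simp [tsig, PowerSeries.coeff_map]
  · ext1 N
    rw [tS2, PowerSeries.coeff_map, PowerSeries.coeff_mk, map_sum]
    refine Finset.sum_congr rfl fun m _ => ?_
    rw [map_mul]
    congr 1
    · simp
    · exact (tU_exists m).choose_spec.1
  · ext1 N
    rw [tR2, PowerSeries.coeff_map, PowerSeries.coeff_mk, map_sum]
    refine Finset.sum_congr rfl fun m _ => ?_
    rw [map_mul]
    congr 1
    · simp
    · exact (tV_exists m).choose_spec.1

theorem tHH_eval (N : ℕ) :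
    LaurentPolynomial.eval₂ (RingHom.id ℚ) (1 : ℚˣ) (PowerSeries.coeff N tHH) = 0 := by
  have h : LaurentPolynomial.eval₂ (RingHom.id ℚ) (1 : ℚˣ) tw = 0 := by
    rw [tw, map_sub, map_add, LaurentPolynomial.eval₂_T, LaurentPolynomial.eval₂_T, map_ofNat]
    norm_num
  rw [tHH, tH, PowerSeries.coeff_C_mul, map_mul, h, zero_mul]

/-- coefficients of X -/
def tbX (i j : ℕ) : ℚ :=
  if i = j then -2 * ∑ m ∈ j.divisors, (m : ℚ)
  else if ((i : ℤ) - j).natAbs ∣ j then (((i : ℤ) - j).natAbs : ℚ) else 0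

/-- coefficients of Z -/
def tbZ (i j : ℕ) : ℚ := ((i : ℚ) - j) * tbX i j

theorem tbX_symm (i j : ℕ) : tbX i j = tbX j i := by
  unfold tbX
  by_cases h : i = j
  · subst h; rfl
  · rw [if_neg h, if_neg (Ne.symm h)]
    have h1 : ((j : ℤ) - i).natAbs = ((i : ℤ) - j).natAbs := by omega
    have h2 : ((i : ℤ) - j).natAbs ∣ j ↔ ((i : ℤ) - j).natAbs ∣ i := by
      rw [← Int.natCast_dvd_natCast, ← Int.natCast_dvd_natCast, Int.natAbs_dvd, Int.natAbs_dvd]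
      constructor
      · intro h; simpa using dvd_add h (dvd_refl ((i : ℤ) - j))
      · intro h; simpa using dvd_sub h (dvd_refl ((i : ℤ) - j))
    rw [h1]
    simp only [h2]

theorem tbZ_symm (i j : ℕ) : tbZ i j = - tbZ j i := by
  unfold tbZ; rw [tbX_symm i j]; ring

theorem tswap_X : tswap (tmk tbX) = tmk tbX := by
  rw [tswap_mk]; congr 1; ext i j; exact tbX_symm j i

theorem tswap_Z : tswap (tmk tbZ) = - tmk tbZ := by
  rw [tswap_mk]; apply tP_ext; intro i j
  rw [tco_mk, tbZ_symm]
  simp [tco, tmk]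

/-- diagonal -/
def tdiag (r : ℕ → ℚ) : TP := tmk fun i j => if i = j then r j else 0

theorem tswap_diag (r : ℕ → ℚ) : tswap (tdiag r) = tdiag r := by
  rw [tdiag, tswap_mk]; congr 1; ext i j
  by_cases h : i = j
  · subst h; rfl
  · rw [if_neg h, if_neg (Ne.symm h)]

theorem tdiag_spec (f : PowerSeries TateBase) (r : ℕ → ℚ)
    (h : ∀ N, PowerSeries.coeff N f =
      algebraMap (LaurentPolynomial ℚ) TateBase (LaurentPolynomial.C (r N))) :
    PowerSeries.map tiota f = tPhi (tdiag r) := by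
  ext N k
  rw [tPhi_coeff, PowerSeries.coeff_map, h, tiota_alg, te_coeff, LaurentPolynomial.C_apply, tdiag,
    tco_mk]
  by_cases hk : k = 0
  · subst hk; simp
  · rw [if_neg hk]
    split_ifs with h1 h2
    · omega
    · rfl
    · rfl

theorem tps_X : (PowerSeries.mk fun i => (i : ℚ)) * (1 - PowerSeries.X) ^ 2 = PowerSeries.X := by
  rw [show (PowerSeries.mk fun i => (i : ℚ)) * (1 - PowerSeries.X) ^ 2 =
    (PowerSeries.mk fun i => (i : ℚ)) - ((PowerSeries.mk fun i => (i : ℚ)) * PowerSeries.X +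
    (PowerSeries.mk fun i => (i : ℚ)) * PowerSeries.X)
    + (PowerSeries.mk fun i => (i : ℚ)) * PowerSeries.X * PowerSeries.X by ring]
  ext n
  rcases n with _ | _ | n
  · simp
  · simp [PowerSeries.coeff_succ_mul_X, PowerSeries.coeff_X]
  · simp [PowerSeries.coeff_succ_mul_X, PowerSeries.coeff_X]

theorem tps_Z : (PowerSeries.mk fun i => (i : ℚ) ^ 2) * (1 - PowerSeries.X) ^ 3 =
    PowerSeries.X + PowerSeries.X * PowerSeries.X := by
  rw [show (PowerSeries.mk fun i => (i : ℚ) ^ 2) * (1 - PowerSeries.X) ^ 3 =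
    (PowerSeries.mk fun i => (i : ℚ) ^ 2) - ((PowerSeries.mk fun i => (i : ℚ) ^ 2) * PowerSeries.X
    + (PowerSeries.mk fun i => (i : ℚ) ^ 2) * PowerSeries.X + (PowerSeries.mk fun i => (i : ℚ) ^ 2) * PowerSeries.X)
    + ((PowerSeries.mk fun i => (i : ℚ) ^ 2) * PowerSeries.X * PowerSeries.X
    + (PowerSeries.mk fun i => (i : ℚ) ^ 2) * PowerSeries.X * PowerSeries.X + (PowerSeries.mk fun i => (i : ℚ) ^ 2) * PowerSeries.X * PowerSeries.X)
    - (PowerSeries.mk fun i => (i : ℚ) ^ 2) * PowerSeries.X * PowerSeries.X * PowerSeries.X by ring]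
  ext n
  rcases n with _ | _ | _ | n
  · simp
  · simp [PowerSeries.coeff_succ_mul_X, PowerSeries.coeff_X]
  · simp [PowerSeries.coeff_succ_mul_X, PowerSeries.coeff_X]
    norm_num
  · simp [PowerSeries.coeff_succ_mul_X, PowerSeries.coeff_X]
    ring

theorem te_ofPS : te (LaurentPolynomial.T 1) = HahnSeries.ofPowerSeries ℤ ℚ PowerSeries.X := by
  rw [te_T, HahnSeries.ofPowerSeries_X]

theorem tu_ne : (1 - HahnSeries.ofPowerSeries ℤ ℚ PowerSeries.X : LaurentSeries ℚ) ≠ 0 := by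
  have := te_unit (⟨_, 1, pow_one _⟩ :
    Submonoid.powers ((1 : LaurentPolynomial ℚ) - LaurentPolynomial.T 1))
  simpa [te_ofPS] using this.ne_zero

theorem tiota_x0 : tiota tx0 = HahnSeries.ofPowerSeries ℤ ℚ (PowerSeries.mk fun i => (i : ℚ)) := by
  have h := congrArg tiota tx0_mul
  have h' := congrArg (HahnSeries.ofPowerSeries ℤ ℚ) tps_X
  simp only [map_mul, map_pow, tiota_alg, map_sub, map_one, te_ofPS] at h h'
  apply mul_right_cancel₀ (pow_ne_zero 2 tu_ne)
  rw [h, h']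

theorem tiota_z0 : tiota (2 * ty0 + tx0) =
    HahnSeries.ofPowerSeries ℤ ℚ (PowerSeries.mk fun i => (i : ℚ) ^ 2) := by
  have h := congrArg tiota tx0_mul
  have h2 := congrArg tiota ty0_mul
  have h' := congrArg (HahnSeries.ofPowerSeries ℤ ℚ) tps_Z
  simp only [map_mul, map_pow, tiota_alg, map_sub, map_one, te_ofPS, map_add] at h h' h2
  apply mul_right_cancel₀ (pow_ne_zero 3 tu_ne)
  rw [h', map_add, map_mul, map_ofNat]
  generalize HahnSeries.ofPowerSeries ℤ ℚ PowerSeries.X = u at *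
  linear_combination 2 * h2 + (1 - u) * h

theorem tsum_ite (N : ℕ) (hN : N ≠ 0) (g : ℕ → ℚ) (k : ℤ) :
    ∑ m ∈ N.divisors, (if (m : ℤ) = k then g m else 0) =
      if 0 < k ∧ k.natAbs ∣ N then g k.natAbs else 0 := by
  split_ifs with h
  · rw [Finset.sum_eq_single k.natAbs]
    · rw [if_pos (by omega)]
    · intro b _ hb
      rw [if_neg (by omega)]
    · intro hh
      exact absurd (Nat.mem_divisors.2 ⟨h.2, hN⟩) hh
  · apply Finset.sum_eq_zero
    intro m hm
    rw [if_neg]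
    rintro rfl
    have := Nat.pos_of_mem_divisors hm
    exact h ⟨by omega, by simpa using Nat.dvd_of_mem_divisors hm⟩

theorem tcoeff_C_mul (a : ℚ) (p : LaurentPolynomial ℚ) (k : ℤ) :
    (LaurentPolynomial.C a * p).coeff k = a * p.coeff k := by
  rw [← LaurentPolynomial.smul_eq_C_mul]; simp

theorem tcoeff_two (k : ℤ) :
    (2 : LaurentPolynomial ℚ).coeff k = if k = 0 then 2 else 0 := by
  rw [show (2 : LaurentPolynomial ℚ) = LaurentPolynomial.C 2 from
    (map_ofNat LaurentPolynomial.C 2).symm, LaurentPolynomial.C_apply]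

theorem tX_Phi : PowerSeries.map tiota tateX = tPhi (tmk tbX) := by
  ext N k
  rw [tPhi_coeff, PowerSeries.coeff_map, tateX, PowerSeries.coeff_mk, tco_mk]
  split_ifs with h0 h1 h1
  · subst h0
    rw [show Localization.mk _ _ = tx0 from rfl, tiota_x0, PowerSeries.coeff_coe, if_neg (by omega),
      PowerSeries.coeff_mk, tbX]
    obtain ⟨n, rfl⟩ := Int.eq_ofNat_of_zero_le (show 0 ≤ k by simpa using h1)
    by_cases hn : n = 0 <;> simp [hn]
  · subst h0
    rw [show Localization.mk _ _ = tx0 from rfl, tiota_x0, PowerSeries.coeff_coe, if_pos (by omega)]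
  all_goals
    rw [tiota_alg, te_coeff]
    have e : (∑ m ∈ N.divisors, LaurentPolynomial.C (m : ℚ) *
          (LaurentPolynomial.T (m : ℤ) + LaurentPolynomial.T (-(m : ℤ)) - 2)).coeff k =
        ∑ m ∈ N.divisors, (if (m : ℤ) = k then (m : ℚ) else 0) +
        ∑ m ∈ N.divisors, (if (m : ℤ) = -k then (m : ℚ) else 0) +
        ∑ m ∈ N.divisors, (if k = 0 then -2 * (m : ℚ) else 0) := by
      rw [← Finset.sum_add_distrib, ← Finset.sum_add_distrib, AddMonoidAlgebra.coeff_sum,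
        Finset.sum_apply']
      refine Finset.sum_congr rfl fun m _ => ?_
      rw [tcoeff_C_mul]
      simp only [AddMonoidAlgebra.coeff_sub, AddMonoidAlgebra.coeff_add, Finsupp.sub_apply,
        Finsupp.add_apply, LaurentPolynomial.T_apply, tcoeff_two, neg_eq_iff_eq_neg]
      split_ifs <;> ring
    rw [e, tsum_ite N h0 (fun m => (m : ℚ)), tsum_ite N h0 (fun m => (m : ℚ)), Int.natAbs_neg]
  · rw [tbX]
    rw [show (((k + N).toNat : ℤ) - N) = k by omega]
    by_cases hk : k = 0
    · subst hk; simp [Finset.mul_sum]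
    · rw [if_neg (show (k + N).toNat ≠ N by omega)]
      simp only [hk, if_false, Finset.sum_const_zero, add_zero]
      rcases lt_or_gt_of_ne hk with h | h
      · simp [h, h.not_gt]
      · simp [h, h.not_gt]
  · have hd : ¬ k.natAbs ∣ N := fun h => by
      have := Nat.le_of_dvd (by omega) h
      omega
    have hk : k ≠ 0 := by omega
    simp [hd, hk]

theorem tZ_Phi : PowerSeries.map tiota (2 * tateY + tateX) = tPhi (tmk tbZ) := by
  rw [tateZ_eq']
  ext N k
  rw [tPhi_coeff, PowerSeries.coeff_map, map_add, PowerSeries.coeff_C, tj, PowerSeries.coeff_map,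
    PowerSeries.coeff_mk, tco_mk]
  split_ifs with h0 h1 h1
  · subst h0
    simp only [Nat.divisors_zero, Finset.sum_empty, map_zero, add_zero]
    rw [tiota_z0, PowerSeries.coeff_coe, if_neg (by omega),
      PowerSeries.coeff_mk, tbZ, tbX]
    obtain ⟨n, rfl⟩ := Int.eq_ofNat_of_zero_le (show 0 ≤ k by simpa using h1)
    by_cases hn : n = 0 <;> simp [hn, sq]
  · subst h0
    simp only [Nat.divisors_zero, Finset.sum_empty, map_zero, add_zero]
    rw [tiota_z0, PowerSeries.coeff_coe, if_pos (by omega)]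
  all_goals
    rw [zero_add, tiota_alg, te_coeff]
    have e : (∑ m ∈ N.divisors, LaurentPolynomial.C ((m : ℚ) ^ 2) *
          (LaurentPolynomial.T (m : ℤ) - LaurentPolynomial.T (-(m : ℤ)))).coeff k =
        ∑ m ∈ N.divisors, (if (m : ℤ) = k then (m : ℚ) ^ 2 else 0) -
        ∑ m ∈ N.divisors, (if (m : ℤ) = -k then (m : ℚ) ^ 2 else 0) := by
      rw [← Finset.sum_sub_distrib, AddMonoidAlgebra.coeff_sum,
        Finset.sum_apply']
      refine Finset.sum_congr rfl fun m _ => ?_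
      rw [tcoeff_C_mul]
      simp only [AddMonoidAlgebra.coeff_sub, Finsupp.sub_apply,
        LaurentPolynomial.T_apply, neg_eq_iff_eq_neg]
      split_ifs <;> ring
    rw [e, tsum_ite N h0 (fun m => (m : ℚ) ^ 2), tsum_ite N h0 (fun m => (m : ℚ) ^ 2),
      Int.natAbs_neg]
  · rw [tbZ, tbX]
    rw [show (((k + N).toNat : ℤ) - N) = k by omega]
    have hq : (((k + N).toNat : ℚ) - N) = k := by
      have : (((k + N).toNat : ℤ) - N) = k := by omega
      exact_mod_cast this
    rw [hq]
    by_cases hk : k = 0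
    · subst hk; simp
    · rw [if_neg (show (k + N).toNat ≠ N by omega)]
      rcases lt_or_gt_of_ne hk with h | h
      · have : ((k.natAbs : ℕ) : ℚ) = -k := by
          rw [Nat.cast_natAbs, abs_of_neg h]; simp
        simp only [this, h.not_gt, neg_pos, h]
        simp
        split_ifs <;> ring
      · have : ((k.natAbs : ℕ) : ℚ) = k := by
          rw [Nat.cast_natAbs, abs_of_pos h]
        simp only [this, h.not_gt, neg_pos, h]
        simp
        split_ifs <;> ring
  · have hd : ¬ k.natAbs ∣ N := fun h => by
      have := Nat.le_of_dvd (by omega) h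
      omega
    simp [hd]

theorem tA4_Phi : ∃ r, PowerSeries.map tiota tateA4 = tPhi (tdiag r) := by
  refine ⟨fun N => if N = 0 then 0 else -5 * ∑ m ∈ N.divisors, (m : ℚ) ^ 3, tdiag_spec _ _ fun N => ?_⟩
  rw [tateA4, PowerSeries.coeff_mk]
  by_cases h : N = 0
  · rw [if_pos h, if_pos h, map_zero, map_zero]
  · rw [if_neg h, if_neg h]

theorem tA6_Phi : ∃ r, PowerSeries.map tiota tateA6 = tPhi (tdiag r) := by
  refine ⟨fun N => if N = 0 then 0 else -(5 * (∑ m ∈ N.divisors, (m : ℚ) ^ 3) +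
              7 * (∑ m ∈ N.divisors, (m : ℚ) ^ 5)) / 12, tdiag_spec _ _ fun N => ?_⟩
  rw [tateA6, PowerSeries.coeff_mk]
  by_cases h : N = 0
  · rw [if_pos h, if_pos h, map_zero, map_zero]
  · rw [if_neg h, if_neg h]

theorem tF_exists : ∃ F : TP, tswap F = F ∧ PowerSeries.map te tHH = tPhi F := by
  obtain ⟨r4, h4⟩ := tA4_Phi
  obtain ⟨r6, h6⟩ := tA6_Phi
  refine ⟨tmk tbZ ^ 2 - tmk tbX ^ 2 - 4 * tmk tbX ^ 3 - 4 * tdiag r4 * tmk tbX - 4 * tdiag r6,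
    ?_, ?_⟩
  · simp only [map_sub, map_mul, map_pow, map_ofNat, tswap_X, tswap_Z, tswap_diag]
    ring
  · have : PowerSeries.map te tHH = PowerSeries.map tiota (tj tHH) := by
      ext1 N
      rw [tj, PowerSeries.coeff_map, PowerSeries.coeff_map, PowerSeries.coeff_map, tiota_alg]
    rw [this, ← tHH_eq]
    simp only [map_sub, map_mul, map_pow, map_ofNat, ← tX_Phi, ← tZ_Phi, ← h4, ← h6, map_add]
    ring

theorem tHH_zero : tHH = 0 := by
  obtain ⟨F, hF, hP⟩ := tF_exists
  have hc : ∀ (N : ℕ) (k : ℤ), (PowerSeries.coeff N tHH).coeff k =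
      if 0 ≤ k + N then tco F (k + N).toNat N else 0 := by
    intro N k
    rw [← tPhi_coeff, ← hP, PowerSeries.coeff_map, te_coeff]
  have hi : ∀ (N : ℕ) (k : ℤ), (PowerSeries.coeff N tHH).coeff (-k) =
      (PowerSeries.coeff N tHH).coeff k := by
    intro N k
    conv_rhs => rw [← tHH_invert, PowerSeries.coeff_map]
    exact (LaurentPolynomial.invert_apply _ _).symm
  have hs : ∀ i j, tco F i j = tco F j i := by
    intro i j
    conv_lhs => rw [← hF, tco_swap]
  have hz : ∀ (N : ℕ) (k : ℕ), 0 < k → (PowerSeries.coeff N tHH).coeff (k : ℤ) = 0 := by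
    intro N
    induction N using Nat.strong_induction_on with
    | _ N ih =>
      intro k hk
      rw [← hi, hc]
      split_ifs with h
      · rw [hs]
        have := ih (N - k) (by omega) k hk
        rw [hc, if_pos (by omega)] at this
        rw [← this]
        congr 1 <;> omega
      · rfl
  ext1 N
  have h0 : PowerSeries.coeff N tHH = LaurentPolynomial.C ((PowerSeries.coeff N tHH).coeff 0) := by
    ext k
    rw [LaurentPolynomial.C_apply]
    split_ifs with h
    · rw [h]
    · rcases Int.natAbs_eq k with h' | h'
      · rw [h']; exact hz N _ (by omega)
      · rw [h', hi]; exact hz N _ (by omega)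
  have h1 := tHH_eval N
  rw [h0, LaurentPolynomial.eval₂_C, RingHom.id_apply] at h1
  rw [h0, h1, map_zero, map_zero]

/-- **The Tate series satisfy the Weierstrass equation of the Tate curve:**
`Y² + X·Y = X³ + a₄·X + a₆` in `B[[q]]`. -/
theorem tate_weierstrass_equation :
    tateY ^ 2 + tateX * tateY = tateX ^ 3 + tateA4 * tateX + tateA6 := by
  have h := tHH_eq
  rw [tHH_zero, map_zero] at h
  have h3 : tj (PowerSeries.C (LaurentPolynomial.C (1 / 4 : ℚ))) * 4 = 1 := by
    rw [show (4 : PowerSeries TateBase) = tj (PowerSeries.C (LaurentPolynomial.C (4))) by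
      simp only [map_ofNat]]
    simp only [← map_mul]
    norm_num
  rw [← sub_eq_zero, ← one_mul (_ - _), ← h3, mul_assoc, h, mul_zero]

end
end

section
/- Let R be a complete discrete valuation ring with uniformizer π. Let R[[u]][u⁻¹] denote the localization of the power series ring R[[u]] at the multiplicative submonoid of powers of u, and let R⟨u⟩ be the π-adic completion of R[[u]][u⁻¹] (equivalently, the inverse limit over n of (R/π^n)[[u]][u⁻¹]). Then R⟨u⟩ is a discrete valuation ring whose maximal ideal is generated by the image of π (i.e. the image of π is a uniformizer of R⟨u⟩). -/
/-- The localization `R[[u]][u⁻¹]` of the power series ring `R[[u]]` at the powers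
of `u`. -/
abbrev PowerSeriesLoc (R : Type*) [CommRing R] : Type _ :=
  Localization (Submonoid.powers (PowerSeries.X : PowerSeries R))

/-- The ring `R⟨u⟩`: the `π`-adic completion of `R[[u]][u⁻¹]`. -/
abbrev PowerSeriesLocCompletion (R : Type*) [CommRing R] (π : R) : Type _ :=
  AdicCompletion
    (Ideal.span {algebraMap (PowerSeries R) (PowerSeriesLoc R) (PowerSeries.C π)})
    (PowerSeriesLoc R)

theorem aux_dvr {B : Type*} [CommRing B] (q : B) (hm : (Ideal.span {q}).IsMaximal)
    (hc : IsAdicComplete (Ideal.span {q}) B) (hq : ∀ n : ℕ, q ^ n ≠ 0) :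
    ∃ (hdom : IsDomain B) (hdvr : @IsDiscreteValuationRing B _ hdom),
      @IsLocalRing.maximalIdeal B _ (@IsDiscreteValuationRing.toIsLocalRing _ _ hdom hdvr) =
        Ideal.span {q} := by
  have hloc : IsLocalRing B := isLocalRing_of_isAdicComplete_maximal (Ideal.span {q})
  have hmax : Ideal.span {q} = IsLocalRing.maximalIdeal B := IsLocalRing.eq_maximalIdeal hm
  have hunit : ∀ y : B, ¬ q ∣ y → IsUnit y := by
    intro y hy
    by_contra h
    apply hy
    rw [← Ideal.mem_span_singleton, hmax]
    exact h
  have key : ∀ x : B, x ≠ 0 → ∃ n : ℕ, ∃ u : Bˣ, q ^ n * u = x := by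
    intro x hx
    have h1 : ∃ n : ℕ, ¬ q ^ n ∣ x := by
      by_contra! h
      apply hx
      refine IsHausdorff.haus hc.toIsHausdorff x fun n => ?_
      rw [SModEq.zero, smul_eq_mul, Ideal.mul_top, Ideal.span_singleton_pow,
        Ideal.mem_span_singleton]
      exact h n
    classical
    have h2 := Nat.find_spec h1
    have h3 := fun m => Nat.find_min (m := m) h1
    set n := Nat.find h1
    rcases n with _ | n
    · simp at h2
    · have h4 := h3 n (Nat.lt_succ_self n)
      push Not at h4
      obtain ⟨y, rfl⟩ := h4
      have : ¬ q ∣ y := by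
        rintro ⟨z, rfl⟩
        exact h2 ⟨z, by ring⟩
      obtain ⟨u, rfl⟩ := hunit y this
      exact ⟨n, u, rfl⟩
  have hdom : IsDomain B := by
    have : NoZeroDivisors B := by
      refine ⟨fun {a b} hab => ?_⟩
      by_contra! h
      obtain ⟨n, u, hu⟩ := key a h.1
      obtain ⟨m, v, hv⟩ := key b h.2
      apply hq (n + m)
      have : q ^ (n + m) * ((u * v : Bˣ) : B) = 0 := by
        rw [← hab, ← hu, ← hv]; push_cast; ring
      exact (Units.mul_left_eq_zero (u * v)).1 this
    exact NoZeroDivisors.to_isDomain B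
  have hq0 : q ≠ 0 := by simpa using hq 1
  have hprime : Prime q := (Ideal.span_singleton_prime hq0).1 hm.isPrime
  have hdvr : IsDiscreteValuationRing B := by
    apply IsDiscreteValuationRing.ofHasUnitMulPowIrreducibleFactorization
    refine ⟨q, hprime.irreducible, fun {x} hx => ?_⟩
    obtain ⟨n, u, hu⟩ := key x hx
    exact ⟨n, u, hu⟩
  exact ⟨hdom, hdvr, hmax.symm⟩

theorem aux_completion {A : Type*} [CommRing A] [IsDomain A] (p : A) (hp : p ≠ 0)
    (hm : (Ideal.span {p}).IsMaximal) :
    ∃ (hdom : IsDomain (AdicCompletion (Ideal.span {p}) A))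
      (hdvr : @IsDiscreteValuationRing (AdicCompletion (Ideal.span {p}) A) _ hdom),
      @IsLocalRing.maximalIdeal (AdicCompletion (Ideal.span {p}) A) _
        (@IsDiscreteValuationRing.toIsLocalRing _ _ hdom hdvr) =
        Ideal.span {algebraMap A (AdicCompletion (Ideal.span {p}) A) p} := by
  have fg : (Ideal.span {p}).FG := ⟨{p}, by simp⟩
  have h1 := AdicCompletion.isMaximal_map_of_le _ (Ideal.span {p}) le_rfl fg
  have h2 := AdicCompletion.isAdicComplete_self _ fg
  rw [Ideal.map_span, Set.image_singleton] at h1 h2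
  refine aux_dvr _ h1 h2 fun n hn => ?_
  have h3 := congrArg (AdicCompletion.evalₐ (Ideal.span {p}) (n + 1)) hn
  rw [← map_pow, AlgHom.commutes, map_zero, Ideal.Quotient.algebraMap_eq,
    Ideal.Quotient.eq_zero_iff_mem, Ideal.span_singleton_pow, Ideal.mem_span_singleton] at h3
  obtain ⟨c, hc⟩ := h3
  apply hm.ne_top
  rw [Ideal.span_singleton_eq_top]
  refine IsUnit.of_mul_eq_one c ?_
  have : p ^ n * (p * c) = p ^ n * 1 := by
    rw [mul_one, ← mul_assoc, ← pow_succ]; exact hc.symm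
  exact mul_left_cancel₀ (pow_ne_zero n hp) this

theorem aux_split {R : Type*} [CommRing R] [IsLocalRing R]
    (π : R) (hπ : IsLocalRing.maximalIdeal R = Ideal.span {π}) (g : PowerSeries R) :
    PowerSeries.C π ∣ g ∨ ∃ (m : ℕ) (h v : PowerSeries R), IsUnit v ∧
      g = PowerSeries.C π * h + PowerSeries.X ^ m * v := by
  by_cases hall : ∀ n, π ∣ PowerSeries.coeff n g
  · left
    choose c hc using hall
    exact ⟨PowerSeries.mk c, by ext n; simp [hc]⟩
  · right
    push Not at hall
    classical
    have h2 := Nat.find_spec hall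
    have h3 := fun m => Nat.find_min (m := m) hall
    set n := Nat.find hall
    have h4 : ∀ m : ℕ, ∃ c, m < n → PowerSeries.coeff m g = π * c := by
      intro m
      by_cases hmn : m < n
      · obtain ⟨c, hc⟩ := not_not.1 (h3 m hmn)
        exact ⟨c, fun _ => hc⟩
      · exact ⟨0, fun h => absurd h hmn⟩
    choose c hc using h4
    refine ⟨n, PowerSeries.mk fun m => if m < n then c m else 0,
      PowerSeries.mk fun m => PowerSeries.coeff (m + n) g, ?_, ?_⟩
    · rw [PowerSeries.isUnit_iff_constantCoeff]
      rw [← PowerSeries.coeff_zero_eq_constantCoeff_apply, PowerSeries.coeff_mk, zero_add]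
      by_contra h
      apply h2
      rw [← Ideal.mem_span_singleton, ← hπ]
      exact h
    · ext m
      rw [map_add, PowerSeries.coeff_C_mul, PowerSeries.coeff_X_pow_mul', PowerSeries.coeff_mk]
      by_cases hmn : m < n
      · simp [hmn, hc m hmn]
      · have : n ≤ m := not_lt.1 hmn
        simp [hmn, this]

theorem aux_maximal {R : Type*} [CommRing R] [IsLocalRing R]
    (π : R) (hπ : IsLocalRing.maximalIdeal R = Ideal.span {π}) :
    (Ideal.span {algebraMap (PowerSeries R) (PowerSeriesLoc R) (PowerSeries.C π)}).IsMaximal := by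
  have hXu : ∀ n : ℕ, IsUnit (algebraMap (PowerSeries R) (PowerSeriesLoc R)
      (PowerSeries.X ^ n)) := fun n =>
    IsLocalization.map_units (M := Submonoid.powers (PowerSeries.X : PowerSeries R)) _
      ⟨PowerSeries.X ^ n, n, rfl⟩
  rw [Ideal.isMaximal_iff]
  constructor
  · intro h
    rw [Ideal.mem_span_singleton] at h
    obtain ⟨z, hz⟩ := h
    obtain ⟨⟨g, s, n, rfl⟩, hg⟩ :=
      IsLocalization.surj (Submonoid.powers (PowerSeries.X : PowerSeries R)) z
    dsimp only at hg
    have h1 : algebraMap (PowerSeries R) (PowerSeriesLoc R) (PowerSeries.X ^ n) =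
        algebraMap (PowerSeries R) (PowerSeriesLoc R) (PowerSeries.C π * g) := by
      rw [map_mul, ← hg, ← mul_assoc, ← hz, one_mul]
    rw [IsLocalization.eq_iff_exists (Submonoid.powers (PowerSeries.X : PowerSeries R))] at h1
    obtain ⟨⟨_, k, rfl⟩, hk⟩ := h1
    have h2 := congrArg (PowerSeries.coeff (n + k)) hk
    dsimp only at h2
    rw [← pow_add, add_comm k n, PowerSeries.coeff_X_pow_self, mul_left_comm,
      PowerSeries.coeff_C_mul] at h2
    have : π ∈ IsLocalRing.maximalIdeal R := by
      rw [hπ]; exact Ideal.mem_span_singleton_self π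
    exact this (IsUnit.of_mul_eq_one _ h2.symm)
  · intro J x hJ hx hxJ
    obtain ⟨⟨g, s, n, rfl⟩, hg⟩ :=
      IsLocalization.surj (Submonoid.powers (PowerSeries.X : PowerSeries R)) x
    dsimp only at hg
    have hpJ := hJ (Ideal.mem_span_singleton_self _)
    rcases aux_split π hπ g with ⟨h, rfl⟩ | ⟨m, h, v, hv, rfl⟩
    · exfalso
      apply hx
      rw [← Ideal.mul_unit_mem_iff_mem _ (hXu n), hg, map_mul]
      exact Ideal.mul_mem_right _ _ (Ideal.mem_span_singleton_self _)
    · rw [← Ideal.eq_top_iff_one]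
      have h5 : algebraMap (PowerSeries R) (PowerSeriesLoc R) (PowerSeries.X ^ m * v) ∈ J := by
        have h6 : algebraMap (PowerSeries R) (PowerSeriesLoc R) (PowerSeries.X ^ m * v) =
          x * algebraMap (PowerSeries R) (PowerSeriesLoc R) (PowerSeries.X ^ n) -
          algebraMap (PowerSeries R) (PowerSeriesLoc R) (PowerSeries.C π) *
            algebraMap (PowerSeries R) (PowerSeriesLoc R) h := by
          rw [hg]; simp only [map_add, map_mul]; ring
        rw [h6]
        exact J.sub_mem (Ideal.mul_mem_right _ _ hxJ) (Ideal.mul_mem_right _ _ hpJ)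
      refine Ideal.eq_top_of_isUnit_mem _ h5 ?_
      rw [map_mul]
      exact (hXu m).mul (hv.map _)

/-- **`R⟨u⟩` is a discrete valuation ring with uniformizer `π`:** for a complete
discrete valuation ring `R` with uniformizer `π`, the `π`-adic completion `R⟨u⟩` of
`R[[u]][u⁻¹]` is a discrete valuation ring whose maximal ideal is generated by the
image of `π`. -/
theorem powerSeriesLocCompletion_isDVR (R : Type*) [CommRing R] [IsDomain R]
    [IsDiscreteValuationRing R] [IsAdicComplete (IsLocalRing.maximalIdeal R) R]
    (π : R) (hπ : IsLocalRing.maximalIdeal R = Ideal.span {π}) :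
    ∃ (hdom : IsDomain (PowerSeriesLocCompletion R π))
      (hdvr : @IsDiscreteValuationRing (PowerSeriesLocCompletion R π) _ hdom),
      @IsLocalRing.maximalIdeal (PowerSeriesLocCompletion R π) _
          (@IsDiscreteValuationRing.toIsLocalRing _ _ hdom hdvr) =
        Ideal.span {algebraMap (PowerSeriesLoc R) (PowerSeriesLocCompletion R π)
          (algebraMap (PowerSeries R) (PowerSeriesLoc R) (PowerSeries.C π))} := by
  have hle : Submonoid.powers (PowerSeries.X : PowerSeries R) ≤ nonZeroDivisors _ :=
    powers_le_nonZeroDivisors_of_noZeroDivisors PowerSeries.X_ne_zero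
  have : IsDomain (PowerSeriesLoc R) := IsLocalization.isDomain_localization hle
  have hπ0 : π ≠ 0 := by
    rintro rfl
    apply IsDiscreteValuationRing.not_a_field R
    simpa using hπ
  refine aux_completion _ ?_ (aux_maximal π hπ)
  intro h
  have h1 := (IsLocalization.injective (PowerSeriesLoc R) hle) (h.trans (map_zero _).symm)
  exact hπ0 (by simpa using congrArg (PowerSeries.coeff 0) h1)
end
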